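/- Let X be a compact Hausdorff space. Then every state on the commutative C*-algebra C(X, ℂ) is CP-approximable. -/

import Mathlib

open scoped ComplexOrder

/-- A map `T` between star rings is *completely positive* if for every `k`, the induced
entrywise map on `k × k` matrices sends positive elements (those of the form `Nᴴ * N`)
to positive elements. -/
def IsCPMap {A B : Type*} [NonUnitalSemiring A] [StarRing A]
    [NonUnitalSemiring B] [StarRing B] (T : A → B) : Prop :=
  ∀ (k : ℕ) (M : Matrix (Fin k) (Fin k) A),
    (∃ N : Matrix (Fin k) (Fin k) A, M = star N * N) →
      ∃ N' : Matrix (Fin k) (Fin k) B, M.map T = star N' * N'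

/-- A *state* on a unital complex star algebra: a unital positive linear functional. -/
structure IsState {A : Type*} [Ring A] [StarRing A] [Module ℂ A] (φ : A →ₗ[ℂ] ℂ) : Prop where
  unital : φ 1 = 1
  pos : ∀ a : A, 0 ≤ φ (star a * a)

/-- A state `φ` is *CP-approximable* if for every finite set `F` and `ε > 0` there is a
finite-rank, unital, completely positive, `φ`-preserving map `T` with `‖T a - a‖ ≤ ε` on `F`. -/
def IsCPApproximable {A : Type*} [NormedRing A] [StarRing A] [Module ℂ A]
    (φ : A →ₗ[ℂ] ℂ) : Prop :=
  ∀ (F : Finset A) (ε : ℝ), 0 < ε →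
    ∃ T : A →ₗ[ℂ] A, FiniteDimensional ℂ (LinearMap.range T) ∧
      T 1 = 1 ∧ IsCPMap (⇑T) ∧ (∀ a, φ (T a) = φ a) ∧ ∀ a ∈ F, ‖T a - a‖ ≤ ε

section Helpers

variable {X : Type*} [TopologicalSpace X] [CompactSpace X]

/-- Complexification of a real continuous function. -/
noncomputable def cplx (f : C(X, ℝ)) : C(X, ℂ) := ⟨fun x => (f x : ℂ), by fun_prop⟩

theorem cplx_apply (f : C(X, ℝ)) (x : X) : cplx f x = (f x : ℂ) := rfl

theorem exists_sqrt (f : C(X, ℝ)) (hf : ∀ x, 0 ≤ f x) :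
    ∃ g : C(X, ℝ), ∀ x, g x * g x = f x :=
  ⟨⟨fun x => Real.sqrt (f x), by fun_prop⟩, fun x => Real.mul_self_sqrt (hf x)⟩

theorem pos_cplx {φ : C(X, ℂ) →ₗ[ℂ] ℂ} (hφ : IsState φ) (f : C(X, ℝ)) (hf : ∀ x, 0 ≤ f x) :
    0 ≤ φ (cplx f) := by
  obtain ⟨g, hg⟩ := exists_sqrt f hf
  have h : cplx f = star (cplx g) * cplx g := by
    ext x
    simp [cplx_apply, ← hg x]
  rw [h]
  exact hφ.pos _

theorem state_star {φ : C(X, ℂ) →ₗ[ℂ] ℂ} (hφ : IsState φ) (b : C(X, ℂ)) :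
    φ (star b) = star (φ b) := by
  have h0 := (Complex.le_def.1 (hφ.pos b)).2
  have h1 := (Complex.le_def.1 (hφ.pos (b + 1))).2
  have h2 := (Complex.le_def.1 (hφ.pos (b + Complex.I • (1 : C(X, ℂ))))).2
  have e1 : star (b + 1) * (b + 1) = star b * b + star b + b + 1 := by
    rw [star_add, star_one]; ring
  have e2 : star (b + Complex.I • (1 : C(X, ℂ))) * (b + Complex.I • (1 : C(X, ℂ)))
      = star b * b + Complex.I • star b - Complex.I • b + 1 := by
    ext x
    simp
    linear_combination (-1 : ℂ) * Complex.I_sq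
  rw [e1] at h1
  rw [e2] at h2
  simp only [map_add, map_sub, map_smul, hφ.unital] at h1 h2
  simp at h0 h1 h2
  apply Complex.ext
  · simp; linarith
  · simp; linarith

theorem state_cs {φ : C(X, ℂ) →ₗ[ℂ] ℂ} (hφ : IsState φ) (b : C(X, ℂ)) :
    ((‖φ b‖ ^ 2 : ℝ) : ℂ) ≤ φ (star b * b) := by
  have h := hφ.pos (b - (φ b) • (1 : C(X, ℂ)))
  have e : star (b - (φ b) • (1 : C(X, ℂ))) * (b - (φ b) • (1 : C(X, ℂ)))
      = star b * b - (φ b) • star b - (star (φ b)) • b + (star (φ b) * φ b) • 1 := by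
    ext x
    simp
    ring
  rw [e] at h
  simp only [map_add, map_sub, map_smul, hφ.unital, state_star hφ, smul_eq_mul] at h
  have e2 : ((‖φ b‖ ^ 2 : ℝ) : ℂ) = star (φ b) * φ b := by
    have := Complex.conj_mul' (φ b)
    push_cast
    exact this.symm
  rw [e2, ← sub_nonneg]
  convert h using 1
  ring

/-- The local states. -/
theorem exists_local {φ : C(X, ℂ) →ₗ[ℂ] ℂ} (hφ : IsState φ) (f : C(X, ℝ)) (hf : ∀ x, 0 ≤ f x)
    (F : Finset C(X, ℂ)) (ε : ℝ) (hε : 0 < ε)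
    (hosc : ∀ a ∈ F, ∀ x y, f x ≠ 0 → f y ≠ 0 → ‖a x - a y‖ ≤ ε) :
    ∃ ψ : C(X, ℂ) →ₗ[ℂ] ℂ, IsState ψ ∧ (∀ a, ψ a * φ (cplx f) = φ (cplx f * a)) ∧
      ∀ a ∈ F, ∀ x, f x ≠ 0 → ‖ψ a - a x‖ ≤ ε := by
  by_cases h0 : φ (cplx f) = 0
  · have hz : ∀ a, φ (cplx f * a) = 0 := by
      intro a
      have h1 := state_cs hφ (cplx f * a)
      let k : C(X, ℝ) := ⟨fun x => (‖f‖ * ‖a‖ ^ 2) * f x - f x ^ 2 * ‖a x‖ ^ 2, by fun_prop⟩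
      have h2 : 0 ≤ φ (cplx k) := by
        apply pos_cplx hφ
        intro x
        have e1 : f x ≤ ‖f‖ := (le_abs_self _).trans (f.norm_coe_le_norm x)
        have e2 : ‖a x‖ ^ 2 ≤ ‖a‖ ^ 2 := by
          gcongr
          exact a.norm_coe_le_norm x
        have e3 : f x * ‖a x‖ ^ 2 ≤ ‖f‖ * ‖a‖ ^ 2 := by
          gcongr
        have := mul_le_mul_of_nonneg_left e3 (hf x)
        change 0 ≤ (‖f‖ * ‖a‖ ^ 2) * f x - f x ^ 2 * ‖a x‖ ^ 2
        nlinarith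
      have e : cplx k = ((‖f‖ * ‖a‖ ^ 2 : ℝ) : ℂ) • cplx f - star (cplx f * a) * (cplx f * a) := by
        ext x
        have := Complex.conj_mul' (a x)
        simp only [cplx_apply, k, ContinuousMap.coe_mk, ContinuousMap.sub_apply,
          ContinuousMap.smul_apply, ContinuousMap.mul_apply, ContinuousMap.star_apply, star_mul,
          smul_eq_mul]
        push_cast
        rw [← this]
        simp
        ring
      rw [e, map_sub, map_smul, h0, smul_zero, zero_sub] at h2
      have h3 : φ (star (cplx f * a) * (cplx f * a)) ≤ 0 := by simpa using h2
      have h4 := h1.trans h3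
      have h5 : ‖φ (cplx f * a)‖ ^ 2 ≤ 0 := by exact_mod_cast h4
      have h6 : ‖φ (cplx f * a)‖ = 0 := by nlinarith [norm_nonneg (φ (cplx f * a))]
      exact norm_eq_zero.1 h6
    by_cases hx : ∃ x, f x ≠ 0
    · obtain ⟨x, hx⟩ := hx
      refine ⟨⟨⟨fun a => a x, fun _ _ => rfl⟩, fun _ _ => rfl⟩, ⟨rfl, fun a => ?_⟩,
        fun a => ?_, fun a ha y hy => hosc a ha x y hx hy⟩
      · exact star_mul_self_nonneg (a x)
      · rw [hz, h0, mul_zero]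
    · push Not at hx
      refine ⟨φ, hφ, fun a => by rw [hz, h0, mul_zero], fun a _ x h => absurd (hx x) h⟩
  · have hp : 0 ≤ φ (cplx f) := pos_cplx hφ f hf
    have hinv : 0 ≤ (φ (cplx f))⁻¹ := inv_nonneg.2 hp
    let ψ : C(X, ℂ) →ₗ[ℂ] ℂ := (φ (cplx f))⁻¹ • (φ ∘ₗ LinearMap.mulLeft ℂ (cplx f))
    have hψ : ∀ a, ψ a = (φ (cplx f))⁻¹ * φ (cplx f * a) := fun a => rfl
    have hs : IsState ψ := by
      refine ⟨?_, fun a => ?_⟩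
      · rw [hψ, mul_one, inv_mul_cancel₀ h0]
      · rw [hψ]
        refine mul_nonneg hinv ?_
        let k : C(X, ℝ) := ⟨fun x => f x * ‖a x‖ ^ 2, by fun_prop⟩
        have e : cplx f * (star a * a) = cplx k := by
          ext x
          have := Complex.conj_mul' (a x)
          simp [cplx_apply, k, ← this]
        rw [e]
        exact pos_cplx hφ k fun x => mul_nonneg (hf x) (by positivity)
    refine ⟨ψ, hs, fun a => ?_, fun a ha x hx => ?_⟩
    · rw [hψ]; field_simp
    · have h1 := state_cs hs (a - (a x) • 1)
      rw [map_sub, map_smul, hs.unital, smul_eq_mul, mul_one] at h1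
      let k : C(X, ℝ) := ⟨fun y => f y * (ε ^ 2 - ‖a y - a x‖ ^ 2), by fun_prop⟩
      have h2 : 0 ≤ φ (cplx k) := by
        apply pos_cplx hφ
        intro y
        change 0 ≤ f y * (ε ^ 2 - ‖a y - a x‖ ^ 2)
        by_cases hy : f y = 0
        · simp [hy]
        · refine mul_nonneg (hf y) ?_
          have := hosc a ha y x hy hx
          have : ‖a y - a x‖ ^ 2 ≤ ε ^ 2 := by gcongr
          linarith
      have e : cplx k = cplx f * (((ε ^ 2 : ℝ) : ℂ) • 1 - star (a - (a x) • 1) * (a - (a x) • 1)) := by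
        ext y
        have := Complex.conj_mul' (a y - a x)
        simp only [cplx_apply, k, ContinuousMap.coe_mk]
        push_cast
        rw [← this]
        simp [cplx_apply]
      have h3 : 0 ≤ ψ (((ε ^ 2 : ℝ) : ℂ) • 1 - star (a - (a x) • 1) * (a - (a x) • 1)) := by
        rw [hψ, ← e]
        exact mul_nonneg hinv h2
      rw [map_sub, map_smul, hs.unital, smul_eq_mul, mul_one, sub_nonneg] at h3
      have h4 := h1.trans h3
      have h5 : ‖ψ a - a x‖ ^ 2 ≤ ε ^ 2 := by exact_mod_cast h4
      exact le_of_sq_le_sq h5 hε.le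

open scoped MatrixOrder Matrix.Norms.L2Operator in
/-- States are completely positive (matrix form). -/
theorem state_matrix {ψ : C(X, ℂ) →ₗ[ℂ] ℂ} (hψ : IsState ψ) (k : ℕ)
    (N : Matrix (Fin k) (Fin k) C(X, ℂ)) :
    ∃ B : Matrix (Fin k) (Fin k) ℂ, (star N * N).map ψ = star B * B := by
  have hps : ((star N * N).map ψ).PosSemidef := by
    refine Matrix.PosSemidef.of_dotProduct_mulVec_nonneg ?_ fun v => ?_
    · ext i j
      have h : star ((star N * N) j i) = (star N * N) i j := by
        have h1 : star (star N * N) = star N * N := by simp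
        exact congrFun (congrFun h1 i) j
      change star (ψ ((star N * N) j i)) = ψ ((star N * N) i j)
      rw [← state_star hψ, h]
    · let w : Fin k → C(X, ℂ) := fun c => ∑ j, (v j) • N c j
      have : star v ⬝ᵥ Matrix.mulVec ((star N * N).map ψ) v = ∑ c, ψ (star (w c) * w c) := by
        simp only [dotProduct, Matrix.mulVec, Matrix.map_apply, Matrix.mul_apply, w,
          star_sum, Finset.sum_mul_sum, map_sum, Pi.star_apply, Matrix.star_apply, star_smul,
          smul_mul_smul_comm, map_smul, smul_eq_mul, Finset.sum_mul, Finset.mul_sum]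
        rw [Finset.sum_comm_cycle]
        refine Finset.sum_congr rfl fun c _ => ?_
        rw [Finset.sum_comm]
        refine Finset.sum_congr rfl fun i _ => Finset.sum_congr rfl fun j _ => ?_
        ring
      rw [this]
      exact Finset.sum_nonneg fun c _ => hψ.pos _
  exact CStarAlgebra.nonneg_iff_eq_star_mul_self.mp hps.nonneg

/-- A finite sum of squares in a C*-algebra is a square. -/
theorem sum_sq_cstar {A : Type*} [CStarAlgebra A] {n : ℕ} (M : Fin n → A) :
    ∃ b : A, ∑ i, star (M i) * M i = star b * b := by
  letI := CStarAlgebra.spectralOrder A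
  haveI := CStarAlgebra.spectralOrderedRing A
  exact CStarAlgebra.nonneg_iff_eq_star_mul_self.mp
    (Finset.sum_nonneg fun i _ => star_mul_self_nonneg (M i))

/-- A finite sum of squares of matrices over a C*-algebra is a square. -/
theorem sum_sq_matrix {A : Type*} [CStarAlgebra A] {n k : ℕ}
    (N : Fin n → Matrix (Fin k) (Fin k) A) :
    ∃ N' : Matrix (Fin k) (Fin k) A, ∑ i, star (N i) * N i = star N' * N' := by
  letI := CStarAlgebra.spectralOrder A
  haveI := CStarAlgebra.spectralOrderedRing A
  obtain ⟨b, hb⟩ := sum_sq_cstar (A := CStarMatrix (Fin k) (Fin k) A)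
    fun i => CStarMatrix.ofMatrix (N i)
  exact ⟨CStarMatrix.ofMatrix.symm b, hb⟩

/-- A finite sum of squares of matrices over `C(X, ℂ)` is a square. -/
theorem sum_sq {n k : ℕ} (N : Fin n → Matrix (Fin k) (Fin k) C(X, ℂ)) :
    ∃ N' : Matrix (Fin k) (Fin k) C(X, ℂ), ∑ i, star (N i) * N i = star N' * N' :=
  sum_sq_matrix N

end Helpers

/-- every state on a commutative C*-algebra `C(X, ℂ)`, `X` compact Hausdorff,
is CP-approximable. -/
theorem statement18 (X : Type*) [TopologicalSpace X] [CompactSpace X] [T2Space X]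
    (φ : C(X, ℂ) →ₗ[ℂ] ℂ) (hφ : IsState φ) :
    IsCPApproximable φ := by
  intro F ε hε
  let U : X → Set X := fun x => {y | ∀ a ∈ F, ‖a y - a x‖ < ε / 2}
  have hU : ∀ x, IsOpen (U x) := by
    intro x
    have : U x = ⋂ a ∈ F, {y | ‖a y - a x‖ < ε / 2} := by
      ext y; simp [U]
    rw [this]
    refine isOpen_biInter_finset fun a _ => ?_
    exact isOpen_lt (by fun_prop) continuous_const
  have hxU : ∀ x, x ∈ U x := fun x a _ => by simpa using hε
  obtain ⟨t, ht⟩ := isCompact_univ.elim_finite_subcover U hU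
    fun x _ => Set.mem_iUnion.2 ⟨x, hxU x⟩
  let e := t.equivFin
  obtain ⟨f, hfs, hf1, hf01, -⟩ := exists_continuous_sum_one_of_isOpen_isCompact
    (n := t.card) (t := Set.univ) (s := fun i => U (e.symm i)) (fun i => hU _) isCompact_univ (by
      intro x hx
      obtain ⟨y, hy, hxy⟩ := Set.mem_iUnion₂.1 (ht hx)
      refine Set.mem_iUnion.2 ⟨e ⟨y, hy⟩, ?_⟩
      simpa using hxy)
  have hfpos : ∀ i x, 0 ≤ f i x := fun i x => (hf01 i x).1
  have hsum : ∀ x, ∑ i, f i x = 1 := fun x => by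
    have := hf1 (Set.mem_univ x)
    simpa using this
  have hloc := fun i => exists_local hφ (f i) (hfpos i) F ε hε (by
    intro a ha x y hx hy
    have h1 : ‖a x - a (e.symm i)‖ < ε / 2 := hfs i (subset_tsupport _ hx) a ha
    have h2 : ‖a y - a (e.symm i)‖ < ε / 2 := hfs i (subset_tsupport _ hy) a ha
    have h3 : a x - a y = (a x - a (e.symm i)) - (a y - a (e.symm i)) := by ring
    rw [h3]
    exact (norm_sub_le _ _).trans (by linarith))
  choose ψ hψ hψφ hψF using hloc
  have hc1 : ∑ i, cplx (f i) = 1 := by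
    ext x
    simp only [ContinuousMap.sum_apply, cplx_apply, ContinuousMap.one_apply]
    exact_mod_cast hsum x
  let T : C(X, ℂ) →ₗ[ℂ] C(X, ℂ) := ∑ i, (ψ i).smulRight (cplx (f i))
  have hT : ∀ a, T a = ∑ i, ψ i a • cplx (f i) := fun a => by
    simp [T, LinearMap.sum_apply]
  refine ⟨T, ?_, ?_, ?_, ?_, ?_⟩
  · have hle : LinearMap.range T ≤ Submodule.span ℂ (Set.range fun i => cplx (f i)) := by
      rintro _ ⟨a, rfl⟩
      rw [hT]
      exact Submodule.sum_mem _ fun i _ =>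
        Submodule.smul_mem _ _ (Submodule.subset_span ⟨i, rfl⟩)
    have : FiniteDimensional ℂ (Submodule.span ℂ (Set.range fun i => cplx (f i))) :=
      FiniteDimensional.span_of_finite ℂ (Set.finite_range _)
    exact Submodule.finiteDimensional_of_le hle
  · rw [hT, ← hc1]
    refine Finset.sum_congr rfl fun i _ => ?_
    rw [hc1, (hψ i).unital, one_smul]
  · rintro k M ⟨N, rfl⟩
    choose B hB using fun i => state_matrix (hψ i) k N
    choose g hg using fun i => exists_sqrt (f i) (hfpos i)
    obtain ⟨N', hN'⟩ := sum_sq fun i => (B i).map fun z => z • cplx (g i)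
    refine ⟨N', ?_⟩
    rw [← hN']
    ext p q x
    have hBpq : ∀ i, ψ i ((star N * N) p q) = (star (B i) * B i) p q := fun i =>
      congrFun (congrFun (hB i) p) q
    rw [Matrix.map_apply, hT, Matrix.sum_apply]
    simp only [hBpq, ContinuousMap.sum_apply]
    refine Finset.sum_congr rfl fun i _ => ?_
    simp only [Matrix.mul_apply, ContinuousMap.smul_apply, ContinuousMap.sum_apply,
      ContinuousMap.mul_apply, Matrix.star_apply, Matrix.map_apply, ContinuousMap.star_apply,
      cplx_apply, smul_eq_mul, Finset.sum_mul, ← hg i x]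
    refine Finset.sum_congr rfl fun c _ => ?_
    simp
    ring
  · intro a
    rw [hT, map_sum]
    simp only [map_smul, smul_eq_mul, hψφ]
    rw [← map_sum, ← Finset.sum_mul, hc1, one_mul]
  · intro a ha
    rw [ContinuousMap.norm_le _ hε.le]
    intro x
    have h : (T a - a) x = ∑ i, (f i x : ℂ) * (ψ i a - a x) := by
      have h1 : (∑ i, (f i x : ℂ)) = 1 := by exact_mod_cast hsum x
      simp only [mul_sub, Finset.sum_sub_distrib, ← Finset.sum_mul, h1, one_mul, hT,
        ContinuousMap.sub_apply, ContinuousMap.sum_apply, ContinuousMap.smul_apply, cplx_apply,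
        smul_eq_mul]
      simp only [mul_comm]
    rw [h]
    calc ‖∑ i, (f i x : ℂ) * (ψ i a - a x)‖ ≤ ∑ i, f i x * ε := by
          refine norm_sum_le_of_le _ fun i _ => ?_
          rw [norm_mul, Complex.norm_real, Real.norm_of_nonneg (hfpos i x)]
          by_cases hx : f i x = 0
          · simp [hx]
          · exact mul_le_mul_of_nonneg_left (hψF i a ha x hx) (hfpos i x)
      _ = ε := by rw [← Finset.sum_mul, hsum, one_mul]
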